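/- arXiv:1502.02799 — 2 statements merged into one kernel-verified Lean document; each statement's English description precedes it below -/
import Mathlib

section
/- Let Π be a CNF theory and V ⊆ 𝒜. Then Forget(Π, V) ≡ unfold(Π, V), where unfold(Π, V) is the iterated strong unfolding of Π with respect to the atoms of V (in any order). -/
variable {α : Type*} [Fintype α] [DecidableEq α]

/-- A clause (or term): a finite set of literals, where a literal is an atom
paired with a polarity (`true` = positive occurrence, `false` = negated). -/
abbrev Clause (α : Type*) := Finset (α × Bool)

/-- A finite set of literals is a legal clause/term if it contains no
complementary pair of literals. -/
def IsClause (c : Clause α) : Prop := ∀ p : α, ¬((p, true) ∈ c ∧ (p, false) ∈ c)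

instance : DecidablePred (IsClause (α := α)) := fun c =>
  decidable_of_iff (∀ p : α, ¬((p, true) ∈ c ∧ (p, false) ∈ c)) Iff.rfl

/-- The atoms occurring in a clause/term. -/
def varsC (c : Clause α) : Finset α := c.image Prod.fst

/-- The atoms occurring positively in a clause/term. -/
def posC (c : Clause α) : Finset α := (c.filter fun l => l.2 = true).image Prod.fst

/-- The atoms occurring negatively in a clause/term. -/
def negC (c : Clause α) : Finset α := (c.filter fun l => l.2 = false).image Prod.fst

/-- The resolvent of two clauses on atom `p`. -/
def res (c c' : Clause α) (p : α) : Clause α :=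
  (c ∪ c') \ ({(p, true), (p, false)} : Finset (α × Bool))

/-- `c` and `c'` are resolvable on atom `p`: `p` occurs in one of them and `¬p` in
the other, and the resolvent contains no complementary pair of literals. -/
def ResolvableOn (c c' : Clause α) (p : α) : Prop :=
  ((p, true) ∈ c ∧ (p, false) ∈ c' ∨ (p, false) ∈ c ∧ (p, true) ∈ c') ∧ IsClause (res c c' p)

/-- Renaming of a literal: flip the polarity of atoms in `V`. -/
def renLit (V : Finset α) (l : α × Bool) : α × Bool := if l.1 ∈ V then (l.1, !l.2) else l

/-- Renaming of a clause w.r.t. the atoms in `V`. -/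
def renClause (V : Finset α) (c : Clause α) : Clause α := c.image (renLit V)

/-- Renaming of a CNF theory w.r.t. the atoms in `V`. -/
def renTheory (V : Finset α) (T : Finset (Clause α)) : Finset (Clause α) := T.image (renClause V)

/-- A Horn clause: at most one positive literal. -/
def HornClause (c : Clause α) : Prop := (posC c).card ≤ 1

/-- A Horn theory: a finite set of Horn clauses. -/
def IsHornTheory (T : Finset (Clause α)) : Prop := ∀ c ∈ T, HornClause c

/-- A Krom theory: each clause contains at most 2 literals. -/
def IsKromTheory (T : Finset (Clause α)) : Prop := ∀ c ∈ T, c.card ≤ 2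

/-- `T` is Horn renamable: some renaming of `T` is a Horn theory. -/
def IsRenHorn (T : Finset (Clause α)) : Prop := ∃ V : Finset α, IsHornTheory (renTheory V T)

/-- The QH-conditions for sets of atoms `Q`, `H` and a clause `c`. -/
def QHcond (Q H : Finset α) (c : Clause α) : Prop :=
  (varsC c ∩ Q).card ≤ 2 ∧ (posC c ∩ H).card ≤ 1 ∧
    ((posC c ∩ H).card = 1 → varsC c ∩ Q = ∅)

/-- The atoms occurring in a CNF theory. -/
def varsT (T : Finset (Clause α)) : Finset α := T.sup varsC

/-- `T` has a QH-partition: a partition `{Q, H}` of its atoms satisfying the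
QH-conditions for each of its clauses. -/
def HasQHPartition (T : Finset (Clause α)) : Prop :=
  ∃ Q H : Finset α, Q ∩ H = ∅ ∧ Q ∪ H = varsT T ∧ ∀ c ∈ T, QHcond Q H c

/-- `T` is q-Horn: some renaming of `T` has a QH-partition. -/
def IsQHorn (T : Finset (Clause α)) : Prop := ∃ V : Finset α, HasQHPartition (renTheory V T)

/-- Satisfaction of a literal by an interpretation (a set of atoms). -/
def litSat (I : Set α) (l : α × Bool) : Prop := if l.2 then l.1 ∈ I else l.1 ∉ I

/-- Satisfaction of a clause (read disjunctively). -/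
def clauseSat (I : Set α) (c : Clause α) : Prop := ∃ l ∈ c, litSat I l

/-- Satisfaction of a term (read conjunctively). -/
def termSat (I : Set α) (t : Clause α) : Prop := ∀ l ∈ t, litSat I l

/-- Satisfaction of a CNF theory. -/
def cnfSat (I : Set α) (T : Finset (Clause α)) : Prop := ∀ c ∈ T, clauseSat I c

/-- One step of the resolution closure. -/
def resStep (S : Set (Clause α)) : Set (Clause α) :=
  S ∪ {d | ∃ c ∈ S, ∃ c' ∈ S, ∃ p : α, ResolvableOn c c' p ∧ d = res c c' p}

/-- The iterated resolution closure `res^n_T`. -/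
def resIter (T : Finset (Clause α)) : ℕ → Set (Clause α)
  | 0 => (↑T : Set (Clause α))
  | n + 1 => resStep (resIter T n)

/-- Propositional formulas over atoms `α`. -/
inductive PropForm (α : Type*) where
  | var : α → PropForm α
  | tru : PropForm α
  | fls : PropForm α
  | neg : PropForm α → PropForm α
  | conj : PropForm α → PropForm α → PropForm α
  | disj : PropForm α → PropForm α → PropForm α

namespace PropForm

/-- Satisfaction of a formula by an interpretation. -/
def Sat (I : Set α) : PropForm α → Prop
  | var p => p ∈ I
  | tru => True
  | fls => False
  | neg φ => ¬ Sat I φ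
  | conj φ ψ => Sat I φ ∧ Sat I ψ
  | disj φ ψ => Sat I φ ∨ Sat I ψ

/-- Logical equivalence: same models. -/
def equivalent (φ ψ : PropForm α) : Prop := ∀ I : Set α, Sat I φ ↔ Sat I ψ

/-- Entailment: every model of `φ` is a model of `ψ`. -/
def entails (φ ψ : PropForm α) : Prop := ∀ I : Set α, Sat I φ → Sat I ψ

/-- The atoms occurring in a formula. -/
def vars : PropForm α → Finset α
  | var p => {p}
  | tru => ∅
  | fls => ∅
  | neg φ => vars φ
  | conj φ ψ => vars φ ∪ vars ψ
  | disj φ ψ => vars φ ∪ vars ψ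

/-- Substitution of the formula `χ` for the atom `p`. -/
def subst (p : α) (χ : PropForm α) : PropForm α → PropForm α
  | var q => if q = p then χ else var q
  | tru => tru
  | fls => fls
  | neg φ => neg (subst p χ φ)
  | conj φ ψ => conj (subst p χ φ) (subst p χ ψ)
  | disj φ ψ => disj (subst p χ φ) (subst p χ ψ)

/-- Forgetting a single atom: `Forget(φ, {p}) = φ[p/⊤] ∨ φ[p/⊥]`. -/
def forget1 (φ : PropForm α) (p : α) : PropForm α := disj (subst p tru φ) (subst p fls φ)

/-- Forgetting a set of atoms (presented as a list), one atom at a time: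
`Forget(φ, ∅) = φ` and `Forget(φ, V ∪ {p}) = Forget(Forget(φ, {p}), V)`. -/
def Forget : PropForm α → List α → PropForm α
  | φ, [] => φ
  | φ, p :: V => Forget (forget1 φ p) V

/-- Renaming of a formula: replace each occurrence of an atom `p ∈ V` by `¬p`. -/
def renForm (V : Finset α) : PropForm α → PropForm α
  | var p => if p ∈ V then neg (var p) else var p
  | tru => tru
  | fls => fls
  | neg φ => neg (renForm V φ)
  | conj φ ψ => conj (renForm V φ) (renForm V ψ)
  | disj φ ψ => disj (renForm V φ) (renForm V ψ)

/-- `φ` is irrelevant to the atoms in `V`: it is equivalent to a formula not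
mentioning any atom of `V`. -/
def IR (φ : PropForm α) (V : List α) : Prop :=
  ∃ φ' : PropForm α, equivalent φ φ' ∧ ∀ p ∈ V, p ∉ vars φ'

end PropForm

/-- The formula corresponding to a literal. -/
def litToForm (l : α × Bool) : PropForm α :=
  if l.2 then PropForm.var l.1 else PropForm.neg (PropForm.var l.1)

/-- The disjunction of the literals of a clause. -/
noncomputable def clauseToForm (c : Clause α) : PropForm α :=
  c.toList.foldr (fun l φ => PropForm.disj (litToForm l) φ) PropForm.fls

/-- The conjunction of the clauses of a CNF theory. -/
noncomputable def cnfToForm (T : Finset (Clause α)) : PropForm α :=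
  T.toList.foldr (fun c φ => PropForm.conj (clauseToForm c) φ) PropForm.tru

/-- `φ` is Horn expressible. -/
def HornExpressible (φ : PropForm α) : Prop :=
  ∃ T : Finset (Clause α), (∀ c ∈ T, IsClause c) ∧ IsHornTheory T ∧
    PropForm.equivalent φ (cnfToForm T)

/-- `φ` is Krom expressible. -/
def KromExpressible (φ : PropForm α) : Prop :=
  ∃ T : Finset (Clause α), (∀ c ∈ T, IsClause c) ∧ IsKromTheory T ∧
    PropForm.equivalent φ (cnfToForm T)

/-- `φ` is renamable-Horn expressible. -/
def RenHornExpressible (φ : PropForm α) : Prop :=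
  ∃ T : Finset (Clause α), (∀ c ∈ T, IsClause c) ∧ IsRenHorn T ∧
    PropForm.equivalent φ (cnfToForm T)

/-- `φ` is q-Horn expressible. -/
def QHornExpressible (φ : PropForm α) : Prop :=
  ∃ T : Finset (Clause α), (∀ c ∈ T, IsClause c) ∧ IsQHorn T ∧
    PropForm.equivalent φ (cnfToForm T)

/-- A formula entails a clause. -/
def EntailsClause (φ : PropForm α) (c : Clause α) : Prop :=
  ∀ I : Set α, PropForm.Sat I φ → clauseSat I c

/-- A prime implicate of a formula. -/
def IsPrimeImplicate (φ : PropForm α) (c : Clause α) : Prop :=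
  IsClause c ∧ EntailsClause φ c ∧ ∀ c' ⊂ c, ¬ EntailsClause φ c'

/-- A term entails a formula. -/
def TermEntails (t : Clause α) (φ : PropForm α) : Prop :=
  ∀ I : Set α, termSat I t → PropForm.Sat I φ

/-- A prime implicant of a formula. -/
def IsPrimeImplicant (φ : PropForm α) (t : Clause α) : Prop :=
  IsClause t ∧ TermEntails t φ ∧ ∀ t' ⊂ t, ¬ TermEntails t' φ

/-- A CNF theory entails a clause. -/
def TheoryEntailsClause (T : Finset (Clause α)) (c : Clause α) : Prop :=
  ∀ I : Set α, cnfSat I T → clauseSat I c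

/-- A prime implicate of a CNF theory. -/
def IsPrimeImplicateT (T : Finset (Clause α)) (c : Clause α) : Prop :=
  IsClause c ∧ TheoryEntailsClause T c ∧ ∀ c' ⊂ c, ¬ TheoryEntailsClause T c'

/-- The set of prime implicates of a CNF theory, as a finite theory. -/
noncomputable def PI (T : Finset (Clause α)) : Finset (Clause α) :=
  (Set.toFinite {c : Clause α | IsPrimeImplicateT T c}).toFinset

/-- Strong unfolding of a CNF theory w.r.t. an atom `p`: keep the clauses not
mentioning `p`, and replace the clauses containing the positive literal `p` by all
their resolvents with clauses containing `¬p`; clauses containing `¬p` are removed. -/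
def unfold1 (T : Finset (Clause α)) (p : α) : Finset (Clause α) :=
  T.filter (fun c => (p, true) ∉ c ∧ (p, false) ∉ c) ∪
    ((T ×ˢ T).filter fun cc =>
        (p, true) ∈ cc.1 ∧ (p, false) ∈ cc.2 ∧ IsClause (res cc.1 cc.2 p)).image
      fun cc => res cc.1 cc.2 p

/-- Iterated strong unfolding w.r.t. a set of atoms (presented as a list):
`unfold(T, ∅) = T` and `unfold(T, V ∪ {p}) = unfold(unfold(T, p), V)`. -/
def unfoldList (T : Finset (Clause α)) : List α → Finset (Clause α)
  | [] => T
  | p :: V => unfoldList (unfold1 T p) V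

theorem sat_clauseToForm (I : Set α) (c : Clause α) :
    PropForm.Sat I (clauseToForm c) ↔ clauseSat I c := by
  have key : ∀ L : List (α × Bool),
      PropForm.Sat I (L.foldr (fun l φ => PropForm.disj (litToForm l) φ) PropForm.fls) ↔
        ∃ l ∈ L, litSat I l := by
    intro L
    induction L with
    | nil => simp [PropForm.Sat]
    | cons a L ih =>
      have h : PropForm.Sat I (litToForm a) ↔ litSat I a := by
        obtain ⟨q, b⟩ := a
        cases b <;> simp [litToForm, litSat, PropForm.Sat]
      simp only [List.foldr_cons, PropForm.Sat, ih, h, List.exists_mem_cons_iff]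
  unfold clauseToForm clauseSat
  rw [key]
  simp only [Finset.mem_toList]

theorem sat_cnfToForm (I : Set α) (T : Finset (Clause α)) :
    PropForm.Sat I (cnfToForm T) ↔ cnfSat I T := by
  have key : ∀ L : List (Clause α),
      PropForm.Sat I (L.foldr (fun c φ => PropForm.conj (clauseToForm c) φ) PropForm.tru) ↔
        ∀ c ∈ L, clauseSat I c := by
    intro L
    induction L with
    | nil => simp [PropForm.Sat]
    | cons a L ih =>
      simp only [List.foldr_cons, PropForm.Sat, ih, sat_clauseToForm, List.forall_mem_cons]
  unfold cnfToForm cnfSat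
  rw [key]
  simp only [Finset.mem_toList]

theorem sat_subst_tru (I : Set α) (p : α) (φ : PropForm α) :
    PropForm.Sat I (PropForm.subst p PropForm.tru φ) ↔ PropForm.Sat (insert p I) φ := by
  induction φ with
  | var q =>
    by_cases h : q = p <;> simp [PropForm.subst, PropForm.Sat, h]
  | _ => simp_all [PropForm.subst, PropForm.Sat]

theorem sat_subst_fls (I : Set α) (p : α) (φ : PropForm α) :
    PropForm.Sat I (PropForm.subst p PropForm.fls φ) ↔ PropForm.Sat (I \ {p}) φ := by
  induction φ with
  | var q =>
    by_cases h : q = p <;> simp [PropForm.subst, PropForm.Sat, h]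
  | _ => simp_all [PropForm.subst, PropForm.Sat]

theorem sat_forget1 (I : Set α) (p : α) (φ : PropForm α) :
    PropForm.Sat I (PropForm.forget1 φ p) ↔
      PropForm.Sat (insert p I) φ ∨ PropForm.Sat (I \ {p}) φ := by
  simp only [PropForm.forget1, PropForm.Sat, sat_subst_tru, sat_subst_fls]

theorem forget_congr (V : List α) : ∀ φ ψ : PropForm α, PropForm.equivalent φ ψ →
    PropForm.equivalent (PropForm.Forget φ V) (PropForm.Forget ψ V) := by
  induction V with
  | nil => intro φ ψ h; exact h
  | cons p V ih =>
    intro φ ψ h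
    apply ih
    intro I
    rw [sat_forget1, sat_forget1, h, h]

theorem litSat_insert (I : Set α) (p : α) (l : α × Bool) (h : l.1 ≠ p) :
    litSat (insert p I) l ↔ litSat I l := by
  simp [litSat, h]

theorem litSat_diff (I : Set α) (p : α) (l : α × Bool) (h : l.1 ≠ p) :
    litSat (I \ {p}) l ↔ litSat I l := by
  simp [litSat, h]

theorem mem_res (c c' : Clause α) (p : α) (l : α × Bool) :
    l ∈ res c c' p ↔ (l ∈ c ∨ l ∈ c') ∧ l.1 ≠ p := by
  obtain ⟨q, b⟩ := l
  cases b <;> simp [res]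

theorem mem_unfold1 (T : Finset (Clause α)) (p : α) (d : Clause α) :
    d ∈ unfold1 T p ↔ (d ∈ T ∧ (p, true) ∉ d ∧ (p, false) ∉ d) ∨
      ∃ c ∈ T, ∃ c' ∈ T, (p, true) ∈ c ∧ (p, false) ∈ c' ∧ IsClause (res c c' p) ∧
        res c c' p = d := by
  simp only [unfold1, Finset.mem_union, Finset.mem_filter, Finset.mem_image, Finset.mem_product,
    Prod.exists]
  constructor
  · rintro (h | ⟨c, c', ⟨⟨h1, h2⟩, h3, h4, h5⟩, h6⟩)
    · exact Or.inl h
    · exact Or.inr ⟨c, h1, c', h2, h3, h4, h5, h6⟩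
  · rintro (h | ⟨c, h1, c', h2, h3, h4, h5, h6⟩)
    · exact Or.inl h
    · exact Or.inr ⟨c, c', ⟨⟨h1, h2⟩, h3, h4, h5⟩, h6⟩

theorem isClause_unfold1 (T : Finset (Clause α)) (hT : ∀ c ∈ T, IsClause c) (p : α) :
    ∀ c ∈ unfold1 T p, IsClause c := by
  intro d hd
  rw [mem_unfold1] at hd
  rcases hd with h | ⟨c, _, c', _, _, _, h, rfl⟩
  · exact hT d h.1
  · exact h

theorem fst_ne_of (p : α) (d : Clause α) (h1 : (p, true) ∉ d) (h2 : (p, false) ∉ d)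
    (l : α × Bool) (hl : l ∈ d) : l.1 ≠ p := by
  rintro rfl
  obtain ⟨q, b⟩ := l
  cases b
  · exact h2 hl
  · exact h1 hl

theorem cnfSat_unfold1 (T : Finset (Clause α)) (hT : ∀ c ∈ T, IsClause c) (p : α) (I : Set α) :
    cnfSat I (unfold1 T p) ↔ cnfSat (insert p I) T ∨ cnfSat (I \ {p}) T := by
  constructor
  · intro h
    by_contra hcon
    simp only [cnfSat, not_or, not_forall] at hcon
    obtain ⟨⟨c', hc', hn'⟩, ⟨c, hc, hn⟩⟩ := hcon
    have g' : ∀ l ∈ c', l.1 ≠ p → ¬ litSat I l := fun l hl hp hs =>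
      hn' ⟨l, hl, (litSat_insert I p l hp).2 hs⟩
    have g : ∀ l ∈ c, l.1 ≠ p → ¬ litSat I l := fun l hl hp hs =>
      hn ⟨l, hl, (litSat_diff I p l hp).2 hs⟩
    have a1 : (p, true) ∉ c' := fun hm => hn' ⟨_, hm, by simp [litSat]⟩
    have a2 : (p, false) ∉ c := fun hm => hn ⟨_, hm, by simp [litSat]⟩
    have a3 : (p, false) ∈ c' := by
      by_contra hm
      obtain ⟨l, hl, hs⟩ := h c' ((mem_unfold1 T p c').2 (Or.inl ⟨hc', a1, hm⟩))
      exact g' l hl (fst_ne_of p c' a1 hm l hl) hs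
    have a4 : (p, true) ∈ c := by
      by_contra hm
      obtain ⟨l, hl, hs⟩ := h c ((mem_unfold1 T p c).2 (Or.inl ⟨hc, hm, a2⟩))
      exact g l hl (fst_ne_of p c hm a2 l hl) hs
    have gr : ∀ l ∈ res c c' p, ¬ litSat I l := by
      intro l hl
      rw [mem_res] at hl
      rcases hl with ⟨hl | hl, hp⟩
      · exact g l hl hp
      · exact g' l hl hp
    have hcl : IsClause (res c c' p) := by
      rintro q ⟨h1, h2⟩
      have b1 := gr _ h1
      have b2 := gr _ h2
      simp [litSat] at b1 b2
      exact b1 b2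
    obtain ⟨l, hl, hs⟩ := h (res c c' p)
      ((mem_unfold1 T p _).2 (Or.inr ⟨c, hc, c', hc', a4, a3, hcl, rfl⟩))
    exact gr l hl hs
  · intro h d hd
    rw [mem_unfold1] at hd
    rcases hd with ⟨hd, h1, h2⟩ | ⟨c, hc, c', hc', h1, h2, _, rfl⟩
    · rcases h with h | h
      · obtain ⟨l, hl, hs⟩ := h d hd
        exact ⟨l, hl, (litSat_insert I p l (fst_ne_of p d h1 h2 l hl)).1 hs⟩
      · obtain ⟨l, hl, hs⟩ := h d hd
        exact ⟨l, hl, (litSat_diff I p l (fst_ne_of p d h1 h2 l hl)).1 hs⟩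
    · rcases h with h | h
      · obtain ⟨⟨q, b⟩, hl, hs⟩ := h c' hc'
        have hq : q ≠ p := by
          rintro rfl
          cases b
          · simp [litSat] at hs
          · exact hT c' hc' q ⟨hl, h2⟩
        exact ⟨(q, b), (mem_res _ _ _ _).2 ⟨Or.inr hl, hq⟩, (litSat_insert I p (q, b) hq).1 hs⟩
      · obtain ⟨⟨q, b⟩, hl, hs⟩ := h c hc
        have hq : q ≠ p := by
          rintro rfl
          cases b
          · exact hT c hc q ⟨h1, hl⟩
          · simp [litSat] at hs
        exact ⟨(q, b), (mem_res _ _ _ _).2 ⟨Or.inl hl, hq⟩, (litSat_diff I p (q, b) hq).1 hs⟩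

/-- `Forget(Π, V) ≡ unfold(Π, V)` for a CNF theory `Π`. -/
theorem forget_equiv_unfoldList
    (T : Finset (Clause α)) (hT : ∀ c ∈ T, IsClause c) (V : List α) :
    PropForm.equivalent (PropForm.Forget (cnfToForm T) V)
      (cnfToForm (unfoldList T V)) := by
  induction V generalizing T with
  | nil => intro I; exact Iff.rfl
  | cons p V ih =>
    intro I
    have h1 : PropForm.equivalent (PropForm.forget1 (cnfToForm T) p)
        (cnfToForm (unfold1 T p)) := by
      intro J
      rw [sat_forget1, sat_cnfToForm, sat_cnfToForm, sat_cnfToForm, cnfSat_unfold1 T hT]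
    exact (forget_congr V _ _ h1 I).trans (ih (unfold1 T p) (isClause_unfold1 T hT p) I)
end

section
/- Let Σ be a double Horn theory and V ⊆ 𝒜. Then Forget(Σ, V) is double Horn, i.e., both Forget(Σ, V) and its negation ¬Forget(Σ, V) are Horn expressible. -/
variable {α : Type*} [Fintype α] [DecidableEq α]

namespace DH

theorem sat_clause (I : Set α) (c : Clause α) :
    PropForm.Sat I (clauseToForm c) ↔ clauseSat I c := by
  have key : ∀ l : List (α × Bool),
      PropForm.Sat I (l.foldr (fun l φ => PropForm.disj (litToForm l) φ) PropForm.fls) ↔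
        ∃ x ∈ l, litSat I x := by
    intro l
    induction l with
    | nil => simp [PropForm.Sat]
    | cons a l ih =>
      have : PropForm.Sat I (litToForm a) ↔ litSat I a := by
        rcases a with ⟨a, _ | _⟩ <;> simp [litToForm, litSat, PropForm.Sat]
      simp [PropForm.Sat, ih, this]
  simp [clauseToForm, key, clauseSat]

theorem sat_cnf (I : Set α) (T : Finset (Clause α)) :
    PropForm.Sat I (cnfToForm T) ↔ cnfSat I T := by
  have key : ∀ l : List (Clause α),
      PropForm.Sat I (l.foldr (fun c φ => PropForm.conj (clauseToForm c) φ) PropForm.tru) ↔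
        ∀ x ∈ l, clauseSat I x := by
    intro l
    induction l with
    | nil => simp [PropForm.Sat]
    | cons a l ih => simp [PropForm.Sat, ih, sat_clause]
  simp [cnfToForm, key, cnfSat]

theorem sat_subst_tru (I : Set α) (p : α) (φ : PropForm α) :
    PropForm.Sat I (PropForm.subst p PropForm.tru φ) ↔ PropForm.Sat (I ∪ {p}) φ := by
  induction φ with
  | var q =>
    by_cases h : q = p <;> simp [PropForm.subst, PropForm.Sat, h]
  | tru => simp [PropForm.subst, PropForm.Sat]
  | fls => simp [PropForm.subst, PropForm.Sat]
  | neg φ ih => simp only [PropForm.subst, PropForm.Sat, ih]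
  | conj φ ψ ih ih' => simp only [PropForm.subst, PropForm.Sat, ih, ih']
  | disj φ ψ ih ih' => simp only [PropForm.subst, PropForm.Sat, ih, ih']

theorem sat_subst_fls (I : Set α) (p : α) (φ : PropForm α) :
    PropForm.Sat I (PropForm.subst p PropForm.fls φ) ↔ PropForm.Sat (I \ {p}) φ := by
  induction φ with
  | var q =>
    by_cases h : q = p <;> simp [PropForm.subst, PropForm.Sat, h]
  | tru => simp [PropForm.subst, PropForm.Sat]
  | fls => simp [PropForm.subst, PropForm.Sat]
  | neg φ ih => simp only [PropForm.subst, PropForm.Sat, ih]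
  | conj φ ψ ih ih' => simp only [PropForm.subst, PropForm.Sat, ih, ih']
  | disj φ ψ ih ih' => simp only [PropForm.subst, PropForm.Sat, ih, ih']

/-- The models are closed under intersection. -/
def Closed (φ : PropForm α) : Prop :=
  ∀ I J : Set α, PropForm.Sat I φ → PropForm.Sat J φ → PropForm.Sat (I ∩ J) φ

theorem closed_cnf (T : Finset (Clause α)) (hT : IsHornTheory T) : Closed (cnfToForm T) := by
  intro I J hI hJ
  rw [sat_cnf] at *
  intro c hc
  have hcard := hT c hc
  unfold HornClause at hcard
  rw [Finset.card_le_one] at hcard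
  obtain ⟨⟨a, x⟩, ha, hIa⟩ := hI c hc
  obtain ⟨⟨b, y⟩, hb, hJb⟩ := hJ c hc
  cases x
  · exact ⟨_, ha, by simp [litSat] at *; tauto⟩
  cases y
  · exact ⟨_, hb, by simp [litSat] at *; tauto⟩
  have hab : a = b := hcard a (by simpa [posC] using ha) b (by simpa [posC] using hb)
  subst hab
  exact ⟨_, ha, by simp [litSat] at *; tauto⟩

theorem closed_of_horn (φ : PropForm α) (h : HornExpressible φ) : Closed φ := by
  obtain ⟨T, -, hT, he⟩ := h
  intro I J hI hJ
  rw [he] at *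
  exact closed_cnf T hT I J hI hJ

theorem horn_of_closed (φ : PropForm α) (h : Closed φ) : HornExpressible φ := by
  classical
  refine ⟨Finset.univ.filter (fun c => IsClause c ∧ HornClause c ∧ EntailsClause φ c),
    by simp +contextual, ?_, ?_⟩
  · intro c hc
    simp at hc
    exact hc.2.1
  intro I
  rw [sat_cnf]
  constructor
  · intro hI c hc
    simp at hc
    exact hc.2.2 I hI
  intro hI
  have key : ∀ s : Finset α, (∀ q ∈ s, q ∉ I) →
      ∃ M : Set α, PropForm.Sat M φ ∧ I ⊆ M ∧ ∀ q ∈ s, q ∉ M := by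
    intro s
    induction s using Finset.induction_on with
    | empty =>
      intro _
      by_contra hcon
      push Not at hcon
      obtain ⟨⟨a, x⟩, ha, hs⟩ := hI ((Finset.univ.filter (fun a => a ∈ I)).image
        (fun a => (a, false))) (by
          simp only [Finset.mem_filter, Finset.mem_univ, true_and]
          refine ⟨by intro p; simp, ?_, ?_⟩
          · unfold HornClause
            rw [Finset.card_le_one]
            intro a ha
            simp [posC] at ha
          · intro M hM
            by_contra hc
            obtain ⟨q, hq, _⟩ := hcon M hM (by
              intro a ha
              by_contra haM
              exact hc ⟨(a, false), by simpa using ha, by simpa [litSat] using haM⟩)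
            simp at hq)
      simp at ha
      obtain ⟨ha, rfl⟩ := ha
      simp [litSat] at hs
      exact hs ha
    | insert q s hq ih =>
      intro hqs
      obtain ⟨M, hM, hIM, hMs⟩ := ih (fun r hr => hqs r (Finset.mem_insert_of_mem hr))
      have hqI : q ∉ I := hqs q (Finset.mem_insert_self _ _)
      have : ∃ N : Set α, PropForm.Sat N φ ∧ I ⊆ N ∧ q ∉ N := by
        by_contra hcon
        push Not at hcon
        obtain ⟨⟨a, x⟩, ha, hs⟩ := hI (insert (q, true)
          ((Finset.univ.filter (fun a => a ∈ I)).image (fun a => (a, false)))) (by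
            simp only [Finset.mem_filter, Finset.mem_univ, true_and]
            refine ⟨?_, ?_, ?_⟩
            · intro p
              simp
              rintro rfl
              exact hqI
            · unfold HornClause
              rw [Finset.card_le_one]
              intro a ha b hb
              simp [posC] at ha hb
              rw [← ha, ← hb]
            · intro M hM
              by_contra hc
              apply hc
              refine ⟨(q, true), by simp, ?_⟩
              have := hcon M hM (by
                intro a ha
                by_contra haM
                exact hc ⟨(a, false), by simpa using ha, by simpa [litSat] using haM⟩)
              simpa [litSat] using this)
        simp at ha
        rcases ha with ⟨rfl, rfl⟩ | ⟨ha, rfl⟩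
        · simp [litSat] at hs
          exact hqI hs
        · simp [litSat] at hs
          exact hs ha
      obtain ⟨N, hN, hIN, hqN⟩ := this
      refine ⟨M ∩ N, h M N hM hN, Set.subset_inter hIM hIN, ?_⟩
      intro r hr hrM
      rcases Finset.mem_insert.1 hr with rfl | hr
      · exact hqN hrM.2
      · exact hMs r hr hrM.1
  obtain ⟨M, hM, hIM, hd⟩ := key (Finset.univ.filter (fun a => a ∉ I)) (by simp)
  have : M = I := by
    apply Set.Subset.antisymm _ hIM
    intro a ha
    by_contra haI
    exact hd a (by simpa using haI) ha
  rwa [this] at hM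

theorem closed_forget1 (φ : PropForm α) (p : α) (h : Closed φ) :
    Closed (PropForm.forget1 φ p) := by
  intro I J hI hJ
  simp only [PropForm.forget1, PropForm.Sat, sat_subst_tru, sat_subst_fls] at *
  rcases hI with hI | hI <;> rcases hJ with hJ | hJ <;> have hh := h _ _ hI hJ
  · left
    convert hh using 1
    ext x; simp; tauto
  all_goals
    right
    convert hh using 1
    ext x; simp; tauto

theorem closed_neg_forget1 (φ : PropForm α) (p : α) (h : Closed (PropForm.neg φ)) :
    Closed (PropForm.neg (PropForm.forget1 φ p)) := by
  intro I J hI hJ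
  simp only [PropForm.forget1, PropForm.Sat, sat_subst_tru, sat_subst_fls, not_or] at *
  have h1 := h _ _ hI.1 hJ.1
  have h2 := h _ _ hI.2 hJ.2
  constructor
  · have e : (I ∩ J ∪ {p}) = (I ∪ {p}) ∩ (J ∪ {p}) := by
      ext x; simp; tauto
    rw [e]; exact h1
  · have e : ((I ∩ J) \ {p}) = (I \ {p} ∩ (J \ {p})) := by
      ext x; simp; tauto
    rw [e]; exact h2

theorem closed_forget (V : List α) : ∀ φ : PropForm α, Closed φ → Closed (PropForm.neg φ) →
    Closed (PropForm.Forget φ V) ∧ Closed (PropForm.neg (PropForm.Forget φ V)) := by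
  induction V with
  | nil => intro φ h h'; exact ⟨h, h'⟩
  | cons p V ih =>
    intro φ h h'
    exact ih _ (closed_forget1 φ p h) (closed_neg_forget1 φ p h')

end DH

/-- If `Σ` is a double Horn theory (a Horn theory whose negation is
also Horn expressible), then `Forget(Σ, V)` is double Horn: both `Forget(Σ, V)` and
`¬Forget(Σ, V)` are Horn expressible. -/
theorem forget_preserves_double_horn
    (S : Finset (Clause α)) (hS : ∀ c ∈ S, IsClause c)
    (hHorn : IsHornTheory S)
    (hdouble : HornExpressible (PropForm.neg (cnfToForm S)))
    (V : List α) :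
    HornExpressible (PropForm.Forget (cnfToForm S) V) ∧
      HornExpressible (PropForm.neg (PropForm.Forget (cnfToForm S) V)) := by
  have h := DH.closed_forget V (cnfToForm S) (DH.closed_cnf S hHorn)
    (DH.closed_of_horn _ hdouble)
  exact ⟨DH.horn_of_closed _ h.1, DH.horn_of_closed _ h.2⟩
end
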